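/- For every n, m ∈ ℤ the Heisenberg operator h_m maps the charge-n component F_{(n)} into itself; moreover h_m v_n = 0 for every m ≥ 1, and h_0 v_n = n · v_n. (Thus each F_{(n)} is a highest weight module for the Heisenberg algebra with highest weight vector v_n of weight n.) -/

import Mathlib

noncomputable section

/-- The neutral fermion Fock space `F = F^{⊗1/2}`: the complex vector space with
basis `{e_S : S a finite subset of ℕ}`. -/
abbrev FockD : Type := Finset ℕ →₀ ℂ

/-- Basis vector `e_S`. -/
def eD (S : Finset ℕ) : FockD := Finsupp.single S 1

/-- Action of the fermion mode `a_m` on the basis vector `e_S`. -/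
def aVec (m : ℤ) (S : Finset ℕ) : FockD :=
  if 0 ≤ m then
    if m.toNat ∈ S then 0
    else ((-1 : ℂ) ^ (S.filter (fun s => m.toNat < s)).card) • eD (insert m.toNat S)
  else
    if (-m - 1).toNat ∈ S then
      ((-1 : ℂ) ^ (S.filter (fun s => (-m - 1).toNat < s)).card) • eD (S.erase ((-m - 1).toNat))
    else 0

/-- The fermion mode `a_m` as a linear operator on `F`. -/
def aOp (m : ℤ) : FockD →ₗ[ℂ] FockD :=
  Finsupp.lsum ℂ fun S => LinearMap.toSpanSingleton ℂ FockD (aVec m S)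

/-- Fermionic normal ordered product `:a_i a_j:`. -/
def NO (i j : ℤ) : FockD →ₗ[ℂ] FockD :=
  if 0 ≤ i then (aOp i).comp (aOp j) else -((aOp j).comp (aOp i))

/-- Heisenberg operator `h_n = (1/2) ∑_{i∈ℤ} (−1)^{i+1} :a_i a_{−2n−1−i}:`
(on each vector only finitely many summands are nonzero). -/
def hD (n : ℤ) (x : FockD) : FockD :=
  (1 / 2 : ℂ) • ∑ᶠ i : ℤ, ((-1 : ℂ) ^ (i + 1)) • NO i (-2 * n - 1 - i) x

/-- Virasoro operator `L^{1/2}_m = (1/2) ∑_{i∈ℤ} i · :a_i a_{−m−i−1}:`. -/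
def LhalfD (m : ℤ) (x : FockD) : FockD :=
  (1 / 2 : ℂ) • ∑ᶠ i : ℤ, (i : ℂ) • NO i (-m - i - 1) x

/-- 2-point Virasoro operator `L¹_n = (1/2) ∑_{j∈ℤ} :h_j h_{n−j}:`, where the bosonic
normal ordered product is `:h_j h_k: = h_j h_k` if `j ≤ k` and `h_k h_j` otherwise. -/
def L1D (n : ℤ) (x : FockD) : FockD :=
  (1 / 2 : ℂ) • ∑ᶠ j : ℤ, if j ≤ n - j then hD j (hD (n - j) x) else hD (n - j) (hD j x)

/-- Charge `c(S) = #{s ∈ S : s odd} − #{s ∈ S : s even}`. -/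
def chg (S : Finset ℕ) : ℤ :=
  ((S.filter fun s => Odd s).card : ℤ) - ((S.filter fun s => Even s).card : ℤ)

/-- Charge-`n` component `F_{(n)}`: the span of the `e_S` with `c(S) = n`. -/
def FockComp (n : ℤ) : Submodule ℂ FockD :=
  Submodule.span ℂ {x : FockD | ∃ S : Finset ℕ, chg S = n ∧ x = eD S}

/-- Index set of the vacuum-like vector `v_n`. -/
def vSet (n : ℤ) : Finset ℕ :=
  if 0 ≤ n then (Finset.range n.toNat).image fun i => 2 * i + 1
  else (Finset.range (-n).toNat).image fun i => 2 * i

/-- Vacuum-like vector `v_n` (`v_0 = e_∅`, `v_n = e_{{1,3,…,2n−1}}`,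
`v_{−n} = e_{{0,2,…,2n−2}}` for `n > 0`). -/
def vD (n : ℤ) : FockD := eD (vSet n)

/-!
The coefficient `(-1)^(i+1)` in `h_n` is the charge carried by the mode `a_i`, and modes whose
indices have an odd sum carry opposite charges. Hence every summand of `h_n` preserves the charge,
while in `h_0` the modes `a_s` and `a_{-s-1}` both contribute the charge of `s` times the occupation
number of `s`; the factor `1/2` makes up for this double count, so `h_0 e_S = c(S) e_S`.

For `m ≥ 1` a summand of `h_m` either moves an element of `S` down by `2m`, or removes two elements
whose sum is `2m - 1`. Neither is possible when `S` is an initial segment of the odd or of the even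
naturals.
-/

theorem finsum_int_eq_sum_natCast_add_negSucc {M : Type*} [AddCommMonoid M] {f : ℤ → M}
    {T : Finset ℕ} (hpos : ∀ k ∉ T, f k = 0) (hneg : ∀ k ∉ T, f (Int.negSucc k) = 0) :
    ∑ᶠ i, f i = ∑ k ∈ T, (f k + f (Int.negSucc k)) := by
  rw [← finsum_comp_equiv Equiv.intEquivNatSumNat.symm,
    finsum_eq_sum_of_support_subset (s := T.disjSum T), Finset.sum_disjSum,
    Finset.sum_add_distrib]
  · rfl
  · rintro (k | k) hk
    · simpa using not_imp_comm.1 (hpos k) hk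
    · simpa using not_imp_comm.1 (hneg k) hk

theorem aOp_eD (m : ℤ) (S : Finset ℕ) : aOp m (eD S) = aVec m S := by
  simp [aOp, eD]

theorem aOp_natCast_eD (k : ℕ) (S : Finset ℕ) :
    aOp k (eD S) =
      if k ∈ S then 0 else (-1 : ℂ) ^ (S.filter (k < ·)).card • eD (insert k S) := by
  simp [aOp_eD, aVec]

theorem aOp_negSucc_eD (k : ℕ) (S : Finset ℕ) :
    aOp (Int.negSucc k) (eD S) =
      if k ∈ S then (-1 : ℂ) ^ (S.filter (k < ·)).card • eD (S.erase k) else 0 := by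
  have hk : (-Int.negSucc k - 1).toNat = k := by omega
  rw [aOp_eD, aVec, if_neg (Int.negSucc_lt_zero k).not_ge, hk]

theorem aOp_natCast_aOp_negSucc_eD (k : ℕ) (S : Finset ℕ) :
    aOp k (aOp (Int.negSucc k) (eD S)) = if k ∈ S then eD S else 0 := by
  rw [aOp_negSucc_eD]
  split_ifs with hk
  · have hfilter : (S.erase k).filter (k < ·) = S.filter (k < ·) := by
      rw [Finset.filter_erase, Finset.erase_eq_of_notMem (by simp)]
    rw [map_smul, aOp_natCast_eD, if_neg (Finset.notMem_erase k S), hfilter,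
      Finset.insert_erase hk, smul_smul, ← pow_add, Even.neg_one_pow ⟨_, rfl⟩, one_smul]
  · exact map_zero _

theorem NO_natCast (k : ℕ) (j : ℤ) : NO k j = aOp k ∘ₗ aOp j :=
  if_pos k.cast_nonneg

theorem NO_negSucc (k : ℕ) (j : ℤ) :
    NO (Int.negSucc k) j = -(aOp j ∘ₗ aOp (Int.negSucc k)) :=
  if_neg (Int.negSucc_lt_zero k).not_ge

theorem NO_natCast_negSucc_eD (k : ℕ) (S : Finset ℕ) :
    NO k (Int.negSucc k) (eD S) = if k ∈ S then eD S else 0 := by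
  rw [NO_natCast, LinearMap.comp_apply, aOp_natCast_aOp_negSucc_eD]

theorem NO_negSucc_natCast_eD (k : ℕ) (S : Finset ℕ) :
    NO (Int.negSucc k) k (eD S) = -if k ∈ S then eD S else 0 := by
  rw [NO_negSucc, LinearMap.neg_apply, LinearMap.comp_apply, aOp_natCast_aOp_negSucc_eD]

/-- The charge `(-1)^(m+1)` carried by the fermion mode `a_m`: applying `a_m` raises the charge by
this amount. -/
def modeCharge (m : ℤ) : ℤ := (m + 1).negOnePow

theorem modeCharge_of_even {m : ℤ} (hm : Even m) : modeCharge m = -1 := by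
  simp [modeCharge, Int.negOnePow_odd _ hm.add_one]

theorem modeCharge_of_odd {m : ℤ} (hm : Odd m) : modeCharge m = 1 := by
  simp [modeCharge, Int.negOnePow_even _ hm.add_one]

theorem modeCharge_add_eq_zero_of_odd {i j : ℤ} (h : Odd (i + j)) :
    modeCharge i + modeCharge j = 0 := by
  rcases Int.even_or_odd i with hi | hi
  · rw [modeCharge_of_even hi, modeCharge_of_odd ((Int.odd_add'.1 h).2 hi), neg_add_cancel]
  · rw [modeCharge_of_odd hi, modeCharge_of_even ((Int.odd_add.1 h).1 hi), add_neg_cancel]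

theorem modeCharge_negSucc (k : ℕ) : modeCharge (Int.negSucc k) = -modeCharge k :=
  eq_neg_of_add_eq_zero_left <| modeCharge_add_eq_zero_of_odd ⟨-1, by omega⟩

theorem chg_eq_sum_modeCharge (S : Finset ℕ) : chg S = ∑ s ∈ S, modeCharge s := by
  rw [chg, Finset.natCast_card_filter, Finset.natCast_card_filter, ← Finset.sum_sub_distrib]
  refine Finset.sum_congr rfl fun s _ => ?_
  rcases Nat.even_or_odd s with hs | hs
  · simp [modeCharge_of_even (m := s) (by exact_mod_cast hs), hs]
  · simp [modeCharge_of_odd (m := s) (by exact_mod_cast hs), hs]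

theorem chg_insert {k : ℕ} {S : Finset ℕ} (hk : k ∉ S) :
    chg (insert k S) = chg S + modeCharge k := by
  rw [chg_eq_sum_modeCharge, chg_eq_sum_modeCharge, Finset.sum_insert hk, add_comm]

theorem chg_erase {k : ℕ} {S : Finset ℕ} (hk : k ∈ S) :
    chg (S.erase k) = chg S - modeCharge k := by
  rw [chg_eq_sum_modeCharge, chg_eq_sum_modeCharge, Finset.sum_erase_eq_sub hk]

theorem eD_mem_FockComp {S : Finset ℕ} {n : ℤ} (hS : chg S = n) : eD S ∈ FockComp n :=
  Submodule.subset_span ⟨S, hS, rfl⟩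

theorem aOp_eD_mem_FockComp (m : ℤ) (S : Finset ℕ) :
    aOp m (eD S) ∈ FockComp (chg S + modeCharge m) := by
  rcases m with k | k
  · rw [Int.ofNat_eq_natCast, aOp_natCast_eD]
    split_ifs with hk
    · exact zero_mem _
    · exact Submodule.smul_mem _ _ (eD_mem_FockComp (chg_insert hk))
  · rw [aOp_negSucc_eD, modeCharge_negSucc, ← sub_eq_add_neg]
    split_ifs with hk
    · exact Submodule.smul_mem _ _ (eD_mem_FockComp (chg_erase hk))
    · exact zero_mem _

section FockComp

variable {n : ℤ} {x : FockD}

theorem aOp_mem_FockComp (m : ℤ) (hx : x ∈ FockComp n) :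
    aOp m x ∈ FockComp (n + modeCharge m) := by
  suffices h : FockComp n ≤ (FockComp (n + modeCharge m)).comap (aOp m) from h hx
  refine Submodule.span_le.2 ?_
  rintro _ ⟨S, rfl, rfl⟩
  exact aOp_eD_mem_FockComp m S

theorem NO_mem_FockComp (i j : ℤ) (hx : x ∈ FockComp n) :
    NO i j x ∈ FockComp (n + (modeCharge i + modeCharge j)) := by
  rw [NO]
  split_ifs
  · rw [add_comm (modeCharge i), ← add_assoc]
    exact aOp_mem_FockComp i (aOp_mem_FockComp j hx)
  · rw [← add_assoc]
    exact neg_mem (aOp_mem_FockComp j (aOp_mem_FockComp i hx))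

theorem hD_mem_FockComp (m : ℤ) (hx : x ∈ FockComp n) : hD m x ∈ FockComp n := by
  refine Submodule.smul_mem _ _ <|
    finsum_induction (· ∈ FockComp n) (zero_mem _) (fun _ _ => add_mem) fun i => ?_
  have hodd : Odd (i + (-2 * m - 1 - i)) := ⟨-m - 1, by ring⟩
  have hNO := NO_mem_FockComp i (-2 * m - 1 - i) hx
  rw [modeCharge_add_eq_zero_of_odd hodd, add_zero] at hNO
  exact Submodule.smul_mem _ _ hNO

end FockComp

theorem hD_zero_eD (S : Finset ℕ) : hD 0 (eD S) = (chg S : ℂ) • eD S := by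
  have hcoeff (i : ℤ) : (-1 : ℂ) ^ (i + 1) = modeCharge i := (Int.cast_negOnePow ℂ (i + 1)).symm
  have hpos (k : ℕ) : (-1 : ℂ) ^ ((k : ℤ) + 1) • NO k (-2 * 0 - 1 - k) (eD S) =
      if k ∈ S then (modeCharge k : ℂ) • eD S else 0 := by
    rw [hcoeff, show -2 * 0 - 1 - (k : ℤ) = Int.negSucc k by omega, NO_natCast_negSucc_eD,
      smul_ite, smul_zero]
  have hneg (k : ℕ) :
      (-1 : ℂ) ^ (Int.negSucc k + 1) • NO (Int.negSucc k) (-2 * 0 - 1 - Int.negSucc k) (eD S) =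
        if k ∈ S then (modeCharge k : ℂ) • eD S else 0 := by
    rw [hcoeff, show -2 * 0 - 1 - Int.negSucc k = k by omega, NO_negSucc_natCast_eD,
      modeCharge_negSucc, Int.cast_neg, neg_smul_neg, smul_ite, smul_zero]
  have hsum : ∑ᶠ i : ℤ, (-1 : ℂ) ^ (i + 1) • NO i (-2 * 0 - 1 - i) (eD S) =
      (2 * chg S : ℂ) • eD S := by
    rw [finsum_int_eq_sum_natCast_add_negSucc (T := S) (fun k hk => by rw [hpos, if_neg hk])
      (fun k hk => by rw [hneg, if_neg hk])]
    calc _ = ∑ k ∈ S, (2 * modeCharge k : ℂ) • eD S :=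
          Finset.sum_congr rfl fun k hk => by
            rw [hpos, hneg, if_pos hk, ← add_smul, two_mul]
      _ = (2 * chg S : ℂ) • eD S := by
          rw [← Finset.sum_smul, ← Finset.mul_sum, chg_eq_sum_modeCharge, Int.cast_sum]
  rw [hD, hsum, smul_smul, ← mul_assoc, one_div_mul_cancel two_ne_zero, one_mul]

/-- `S` consists of the first few odd naturals or of the first few even naturals: below any of its
elements it contains exactly the naturals of the same parity. The sets `vSet n` are of this form. -/
def IsParityInitial (S : Finset ℕ) : Prop :=
  ∀ t ∈ S, ∀ s ≤ t, s ∈ S ↔ s ≡ t [MOD 2]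

namespace IsParityInitial

variable {S : Finset ℕ}

theorem modEq_two (hS : IsParityInitial S) {s t : ℕ} (hs : s ∈ S) (ht : t ∈ S) :
    s ≡ t [MOD 2] := by
  rcases le_total s t with hst | hts
  · exact (hS t ht s hst).1 hs
  · exact ((hS s hs t hts).1 ht).symm

theorem aOp_aOp_negSucc_eD_eq_zero (hS : IsParityInitial S) {i : ℤ} {k : ℕ}
    (hodd : Odd (i + Int.negSucc k)) (hlt : i + Int.negSucc k < -1) :
    aOp i (aOp (Int.negSucc k) (eD S)) = 0 := by
  by_cases hk : k ∈ S
  swap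
  · rw [aOp_negSucc_eD, if_neg hk, map_zero]
  rw [Int.odd_iff] at hodd
  rw [aOp_negSucc_eD, if_pos hk, map_smul]
  rcases i with l | l
  · have hlk : l < k := by grind
    have hmod : l ≡ k [MOD 2] := by grind [Nat.ModEq]
    have hl : l ∈ S := (hS k hk l hlk.le).2 hmod
    rw [Int.ofNat_eq_natCast, aOp_natCast_eD, if_pos (Finset.mem_erase.2 ⟨hlk.ne, hl⟩), smul_zero]
  · have hmod : ¬ l ≡ k [MOD 2] := by grind [Nat.ModEq]
    have hl : l ∉ S := fun hl => hmod (hS.modEq_two hl hk)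
    rw [aOp_negSucc_eD, if_neg fun h => hl (Finset.mem_of_mem_erase h), smul_zero]

theorem NO_eD_eq_zero (hS : IsParityInitial S) {i j : ℤ} (hodd : Odd (i + j)) (hlt : i + j < -1) :
    NO i j (eD S) = 0 := by
  rcases i with l | l
  · obtain ⟨k, rfl⟩ : ∃ k, j = Int.negSucc k := Int.eq_negSucc_of_lt_zero (by grind)
    rw [Int.ofNat_eq_natCast] at hodd hlt ⊢
    rw [NO_natCast, LinearMap.comp_apply, hS.aOp_aOp_negSucc_eD_eq_zero hodd hlt]
  · rw [add_comm] at hodd hlt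
    rw [NO_negSucc, LinearMap.neg_apply, LinearMap.comp_apply,
      hS.aOp_aOp_negSucc_eD_eq_zero hodd hlt, neg_zero]

theorem hD_eD_eq_zero (hS : IsParityInitial S) {m : ℤ} (hm : 1 ≤ m) : hD m (eD S) = 0 := by
  have hterm (i : ℤ) : NO i (-2 * m - 1 - i) (eD S) = 0 :=
    hS.NO_eD_eq_zero ⟨-m - 1, by ring⟩ (by linarith)
  simp only [hD, hterm, smul_zero, finsum_zero]

end IsParityInitial

theorem mem_vSet {n : ℤ} {t : ℕ} :
    t ∈ vSet n ↔ Odd t ∧ (t : ℤ) < 2 * n ∨ Even t ∧ (t : ℤ) < -2 * n := by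
  rw [vSet, Nat.odd_iff, Nat.even_iff]
  split_ifs <;> simp only [Finset.mem_image, Finset.mem_range]
  · exact ⟨by grind, fun _ => ⟨t / 2, by grind⟩⟩
  · exact ⟨by grind, fun _ => ⟨t / 2, by grind⟩⟩

theorem isParityInitial_vSet (n : ℤ) : IsParityInitial (vSet n) := by
  intro t ht s hst
  simp only [mem_vSet, Nat.odd_iff, Nat.even_iff, Nat.ModEq] at ht ⊢
  omega

theorem chg_vSet (n : ℤ) : chg (vSet n) = n := by
  rw [chg_eq_sum_modeCharge, vSet]
  split_ifs with hn
  · have hcharge (i : ℕ) : modeCharge (2 * i + 1 : ℕ) = 1 := modeCharge_of_odd (by simp)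
    rw [Finset.sum_image fun _ _ _ _ h => by simpa using h]
    simp only [hcharge, Finset.sum_const, Finset.card_range, nsmul_one]
    omega
  · have hcharge (i : ℕ) : modeCharge (2 * i : ℕ) = -1 := modeCharge_of_even (by simp)
    rw [Finset.sum_image fun _ _ _ _ h => by simpa using h]
    simp only [hcharge, Finset.sum_const, Finset.card_range, smul_neg, nsmul_one]
    omega

/-- Each Heisenberg operator `h_m` maps the charge-`n` component `F_{(n)}` into itself;
moreover `h_m v_n = 0` for `m ≥ 1` and `h_0 v_n = n · v_n`, so `F_{(n)}` is a highest weight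
module for the Heisenberg algebra with highest weight vector `v_n` of weight `n`. -/
theorem heisenberg_highest_weight (n : ℤ) :
    (∀ m : ℤ, ∀ x ∈ FockComp n, hD m x ∈ FockComp n) ∧
    (∀ m : ℤ, 1 ≤ m → hD m (vD n) = 0) ∧
    hD 0 (vD n) = (n : ℂ) • vD n := by
  refine ⟨fun m _ hx => hD_mem_FockComp m hx,
    fun _ hm => (isParityInitial_vSet n).hD_eD_eq_zero hm, ?_⟩
  rw [vD, hD_zero_eD, chg_vSet]
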